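/- Let a ≥ 1 and b ≥ 0. The two-row partition (a+b, a) is a maximal element in the standard immersion poset on partitions of 2a+b if and only if b(b+3)/2 ≥ a. -/

import Mathlib

open Finset MvPolynomial

/-- A partition of `n`, represented as a weakly decreasing list of positive
integers summing to `n`. -/
def IsPartitionOf (n : ℕ) (l : List ℕ) : Prop :=
  l.Pairwise (· ≥ ·) ∧ (∀ x ∈ l, 0 < x) ∧ l.sum = n

/-- `T : ℕ → ℕ → ℕ` is a semistandard Young tableau of shape `l`
(rows weakly increase, columns strictly increase, entries are `0` outside
of the diagram; entries are 0-indexed, so entry value `k` stands for the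
letter `k+1`). -/
def IsSSYT (l : List ℕ) (T : ℕ → ℕ → ℕ) : Prop :=
  (∀ i j1 j2, j1 ≤ j2 → j2 < l.getD i 0 → T i j1 ≤ T i j2) ∧
  (∀ i1 i2 j, i1 < i2 → j < l.getD i2 0 → T i1 j < T i2 j) ∧
  (∀ i j, l.getD i 0 ≤ j → T i j = 0)

/-- The tableau `T` of shape `l` has content `ν`: for every `k`, the number of
cells of the diagram of `l` whose entry is `k` equals the `(k+1)`-st part of `ν`. -/
def HasContent (l : List ℕ) (T : ℕ → ℕ → ℕ) (ν : List ℕ) : Prop :=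
  ∀ k, Nat.card {c : ℕ × ℕ // c.2 < l.getD c.1 0 ∧ T c.1 c.2 = k} = ν.getD k 0

/-- The Kostka number `K_{l,ν}`: the number of semistandard Young tableaux of
shape `l` and content `ν`. -/
noncomputable def kostka (l ν : List ℕ) : ℕ :=
  Nat.card {T : ℕ → ℕ → ℕ // IsSSYT l T ∧ HasContent l T ν}

/-- `f^λ`, the number of standard Young tableaux of shape `l`. -/
noncomputable def fSYT (l : List ℕ) : ℕ := kostka l (List.replicate l.sum 1)

/-- Dominance order: all partial sums of `l` are at most those of `m`. -/
def DomLE (l m : List ℕ) : Prop := ∀ k, (l.take k).sum ≤ (m.take k).sum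

/-- The standard immersion order: dominance together with `f^λ ≤ f^μ`. -/
def StdLE (l m : List ℕ) : Prop := DomLE l m ∧ fSYT l ≤ fSYT m

/-- Strict standard immersion order. -/
def StdLT (l m : List ℕ) : Prop := StdLE l m ∧ l ≠ m

/-- `m` covers `l` in the standard immersion poset on partitions of `n`. -/
def StdCovBy (n : ℕ) (l m : List ℕ) : Prop :=
  StdLT l m ∧ ∀ ν, IsPartitionOf n ν → StdLT l ν → ¬ StdLT ν m

/-- `l` is a maximal element of the standard immersion poset on partitions of `n`. -/
def StdMaximal (n : ℕ) (l : List ℕ) : Prop :=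
  ∀ m, IsPartitionOf n m → m ≠ l → ¬ StdLE l m

/-- The immersion order on partitions of `n`: `l ≤_I m` iff
`K_{l,α} ≤ K_{m,α}` for every partition `α` of `n`. -/
def ImmersionLE (n : ℕ) (l m : List ℕ) : Prop :=
  ∀ ν, IsPartitionOf n ν → kostka l ν ≤ kostka m ν

/-- Strict immersion order. -/
def ImmersionLT (n : ℕ) (l m : List ℕ) : Prop := ImmersionLE n l m ∧ l ≠ m

/-- `m` covers `l` in the immersion poset on partitions of `n`. -/
def ImmersionCovBy (n : ℕ) (l m : List ℕ) : Prop :=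
  ImmersionLT n l m ∧ ∀ ν, IsPartitionOf n ν → ImmersionLT n l ν → ¬ ImmersionLT n ν m

/-!
The largest entry of a standard tableau fills a corner of its shape, which gives the branching rule
`f^λ = ∑ f^(λ - corner)`. For two rows, induction turns it into
`f^(q+b, q) (q+b+1)! q! = (2q+b)! (b+1)`, so `f^(q+1+b, q+1)` and `f^(q+b+2, q)` have ratio
`(q+b+3)(b+1) : (q+1)(b+3)`, and the first is the larger one iff `2(q+1) < (b+1)(b+2)`.

The partitions of `2a+b` that dominate `(a+b, a)` are the `(2a+b-i, i)` with `i ≤ a`. If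
`2a < (b+1)(b+2)`, that is `a ≤ b(b+3)/2`, the comparison above shows that `f` increases in `i` all
the way up to `i = a`; otherwise already `i = a - 1` has at least as many tableaux as `i = a`.
-/

/-- The Young diagram whose `i`-th row has `μ i` boxes, as the set of the coordinates
(row, column) of its boxes. Nothing is assumed of the sequence `μ` of row lengths. -/
def boxes (μ : ℕ → ℕ) : Set (ℕ × ℕ) := {c | c.2 < μ c.1}

/-- `T` is a standard Young tableau of size `n` with row lengths `μ`: its entries are
`0, …, n - 1`, each occurring once, and it is `0` outside the diagram. -/
structure IsStandardTableau (n : ℕ) (μ : ℕ → ℕ) (T : ℕ → ℕ → ℕ) : Prop where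
  row_lt : ∀ i j₁ j₂, j₁ < j₂ → j₂ < μ i → T i j₁ < T i j₂
  col_lt : ∀ i₁ i₂ j, i₁ < i₂ → j < μ i₂ → T i₁ j < T i₂ j
  eq_zero : ∀ i j, μ i ≤ j → T i j = 0
  bijOn : Set.BijOn (Function.uncurry T) (boxes μ) (Set.Iio n)

/-- The number of standard Young tableaux of size `n` with row lengths `μ`. -/
noncomputable def numStandardTableaux (n : ℕ) (μ : ℕ → ℕ) : ℕ :=
  Nat.card {T // IsStandardTableau n μ T}

/-- The row lengths after removal of the last box of row `i`. -/
def removeBox (μ : ℕ → ℕ) (i : ℕ) : ℕ → ℕ := Function.update μ i (μ i - 1)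

/-- The filling `T` with the entry in row `i` and column `j` replaced by `v`. -/
def setEntry (T : ℕ → ℕ → ℕ) (i j v : ℕ) : ℕ → ℕ → ℕ :=
  Function.update T i (Function.update (T i) j v)

section Branching

variable {n i : ℕ} {μ : ℕ → ℕ} {T : ℕ → ℕ → ℕ}

lemma removeBox_apply (μ : ℕ → ℕ) (i k : ℕ) :
    removeBox μ i k = if k = i then μ i - 1 else μ k := by
  simp [removeBox, Function.update_apply]

lemma setEntry_apply (T : ℕ → ℕ → ℕ) (i j v i' j' : ℕ) :
    setEntry T i j v i' j' = if i' = i ∧ j' = j then v else T i' j' := by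
  rcases eq_or_ne i' i with rfl | hi <;> simp [setEntry, Function.update_apply, *]

@[simp]
lemma setEntry_apply_self (T : ℕ → ℕ → ℕ) (i j v : ℕ) : setEntry T i j v i j = v := by
  simp [setEntry]

@[simp]
lemma setEntry_setEntry (T : ℕ → ℕ → ℕ) (i j v w : ℕ) :
    setEntry (setEntry T i j v) i j w = setEntry T i j w := by
  simp [setEntry]

lemma setEntry_eq_self {j v : ℕ} (h : T i j = v) : setEntry T i j v = T := by
  simp [setEntry, ← h]

lemma boxes_eq_insert_removeBox (hi : 0 < μ i) :
    boxes μ = insert (i, μ i - 1) (boxes (removeBox μ i)) := by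
  ext ⟨i', j⟩
  simp only [boxes, Set.mem_ofPred_eq, Set.mem_insert_iff, Prod.mk.injEq, removeBox_apply]
  split_ifs with h
  · subst h; omega
  · simp [h]

lemma notMem_boxes_removeBox : (i, μ i - 1) ∉ boxes (removeBox μ i) := by
  simp [boxes, removeBox_apply]

lemma bijOn_boxes_succ_iff (hi : 0 < μ i) (hT : T i (μ i - 1) = n) :
    Set.BijOn (Function.uncurry T) (boxes μ) (Set.Iio (n + 1)) ↔
      Set.BijOn (Function.uncurry T) (boxes (removeBox μ i)) (Set.Iio n) := by
  have hn : Set.Iio (n + 1) = insert (Function.uncurry T (i, μ i - 1)) (Set.Iio n) := by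
    ext k
    simp only [Function.uncurry_apply_pair, hT, Set.mem_Iio, Set.mem_insert_iff]
    omega
  rw [boxes_eq_insert_removeBox hi, hn,
    Set.BijOn.insert_iff notMem_boxes_removeBox (by simp [hT])]

lemma uncurry_setEntry_eqOn_boxes_removeBox (T : ℕ → ℕ → ℕ) (v : ℕ) :
    Set.EqOn (Function.uncurry (setEntry T i (μ i - 1) v)) (Function.uncurry T)
      (boxes (removeBox μ i)) := by
  rintro ⟨i', j⟩ hc
  have hne : ¬(i' = i ∧ j = μ i - 1) := by
    rintro ⟨rfl, rfl⟩
    exact notMem_boxes_removeBox hc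
  simp [setEntry_apply, hne]

namespace IsStandardTableau

lemma entry_lt (h : IsStandardTableau n μ T) {j : ℕ} (hj : j < μ i) : T i j < n :=
  h.bijOn.mapsTo (show (i, j) ∈ boxes μ from hj)

lemma exists_corner (h : IsStandardTableau (n + 1) μ T) :
    ∃ i, μ (i + 1) < μ i ∧ T i (μ i - 1) = n := by
  obtain ⟨⟨i, j⟩, hj : j < μ i, hT : T i j = n⟩ := h.bijOn.surjOn (Set.mem_Iio.2 n.lt_succ_self)
  have row_end : μ i ≤ j + 1 := by
    by_contra! hlt
    have := h.row_lt i j (j + 1) j.lt_succ_self hlt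
    have := h.entry_lt hlt
    omega
  have col_end : μ (i + 1) ≤ j := by
    by_contra! hlt
    have := h.col_lt i (i + 1) j i.lt_succ_self hlt
    have := h.entry_lt hlt
    omega
  obtain rfl : j = μ i - 1 := by omega
  exact ⟨i, by omega, hT⟩

lemma corner_unique (h : IsStandardTableau n μ T) {i' : ℕ} (hi : 0 < μ i) (hi' : 0 < μ i')
    (heq : T i (μ i - 1) = T i' (μ i' - 1)) : i = i' :=
  congrArg Prod.fst <| h.bijOn.injOn (show (i, μ i - 1) ∈ boxes μ from Nat.sub_one_lt_of_lt hi)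
    (show (i', μ i' - 1) ∈ boxes μ from Nat.sub_one_lt_of_lt hi') heq

lemma removeCorner (h : IsStandardTableau (n + 1) μ T) (hi : 0 < μ i) (hT : T i (μ i - 1) = n) :
    IsStandardTableau n (removeBox μ i) (setEntry T i (μ i - 1) 0) where
  row_lt i' j₁ j₂ hj hj₂ := by
    have := h.row_lt i' j₁ j₂ hj
    grind [removeBox_apply, setEntry_apply]
  col_lt i₁ i₂ j hij hj := by
    have := h.col_lt i₁ i₂ j hij
    have := h.entry_lt (i := i₂) (j := j)
    grind [removeBox_apply, setEntry_apply]
  eq_zero i' j hj := by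
    have := h.eq_zero i' j
    grind [removeBox_apply, setEntry_apply]
  bijOn := ((bijOn_boxes_succ_iff hi hT).1 h.bijOn).congr
    (uncurry_setEntry_eqOn_boxes_removeBox T 0).symm

lemma addCorner (hμ : Antitone μ) (hi : μ (i + 1) < μ i)
    (h : IsStandardTableau n (removeBox μ i) T) :
    IsStandardTableau (n + 1) μ (setEntry T i (μ i - 1) n) where
  row_lt i' j₁ j₂ hj hj₂ := by
    have := h.row_lt i' j₁ j₂ hj
    have := h.entry_lt (i := i') (j := j₁)
    grind [removeBox_apply, setEntry_apply]
  col_lt i₁ i₂ j hij hj := by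
    have := h.col_lt i₁ i₂ j hij
    have := h.entry_lt (i := i₁) (j := j)
    have above : μ i₂ ≤ μ i₁ := hμ hij.le
    have below : i < i₂ → μ i₂ ≤ μ (i + 1) := fun hlt => hμ hlt
    grind [removeBox_apply, setEntry_apply]
  eq_zero i' j hj := by
    have := h.eq_zero i' j
    grind [removeBox_apply, setEntry_apply]
  bijOn := (bijOn_boxes_succ_iff (Nat.zero_lt_of_lt hi) (setEntry_apply_self ..)).2 <|
    h.bijOn.congr (uncurry_setEntry_eqOn_boxes_removeBox T n).symm

lemma finite (n : ℕ) (μ : ℕ → ℕ) : Finite {T // IsStandardTableau n μ T} := by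
  rcases isEmpty_or_nonempty {T // IsStandardTableau n μ T} with _ | ⟨⟨_, hT₀⟩⟩
  · infer_instance
  have : Finite (boxes μ) := hT₀.bijOn.finite_iff_finite.2 (Set.finite_Iio n)
  let entries (T : {T // IsStandardTableau n μ T}) (c : boxes μ) : Fin n :=
    ⟨T.1 c.1.1 c.1.2, T.2.entry_lt c.2⟩
  refine Finite.of_injective entries fun T T' heq => Subtype.ext ?_
  ext i j
  by_cases hj : j < μ i
  · exact congrArg Fin.val (congrFun heq ⟨(i, j), hj⟩)
  · rw [T.2.eq_zero i j (not_lt.1 hj), T'.2.eq_zero i j (not_lt.1 hj)]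

end IsStandardTableau

theorem numStandardTableaux_succ (n : ℕ) (hμ : Antitone μ) {corners : Finset ℕ}
    (hcorners : ∀ i, i ∈ corners ↔ μ (i + 1) < μ i) :
    numStandardTableaux (n + 1) μ = ∑ i ∈ corners, numStandardTableaux n (removeBox μ i) := by
  have pos {i : ℕ} (hi : i ∈ corners) : 0 < μ i := Nat.zero_lt_of_lt ((hcorners i).1 hi)
  let extend (S : Σ i : corners, {T // IsStandardTableau n (removeBox μ i) T}) :
      {T // IsStandardTableau (n + 1) μ T} :=
    ⟨setEntry S.2.1 S.1 (μ S.1 - 1) n, S.2.2.addCorner hμ ((hcorners _).1 S.1.2)⟩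
  have bij : Function.Bijective extend := by
    constructor
    · rintro ⟨⟨i, hi⟩, T, hT⟩ ⟨⟨i', hi'⟩, T', hT'⟩ heq
      have heq' : setEntry T i (μ i - 1) n = setEntry T' i' (μ i' - 1) n := congrArg Subtype.val heq
      have hext := hT.addCorner hμ ((hcorners i).1 hi)
      obtain rfl : i = i' := hext.corner_unique (pos hi) (pos hi') <| by
        conv_rhs => rw [heq']
        simp
      have hTT' : T = T' := by
        rw [← setEntry_eq_self (hT.eq_zero i (μ i - 1) (by simp [removeBox_apply])),
          ← setEntry_eq_self (hT'.eq_zero i (μ i - 1) (by simp [removeBox_apply])),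
          ← setEntry_setEntry T i _ n, heq', setEntry_setEntry]
      subst hTT'
      rfl
    · rintro ⟨T, hT⟩
      obtain ⟨i, hi, hTi⟩ := hT.exists_corner
      refine ⟨⟨⟨i, (hcorners i).2 hi⟩, _, hT.removeCorner (Nat.zero_lt_of_lt hi) hTi⟩, ?_⟩
      simp [extend, setEntry_eq_self hTi]
  have (i : corners) := IsStandardTableau.finite n (removeBox μ i)
  rw [numStandardTableaux, ← Nat.card_eq_of_bijective extend bij, Nat.card_sigma]
  exact Finset.sum_coe_sort corners fun i => numStandardTableaux n (removeBox μ i)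

lemma numStandardTableaux_zero : numStandardTableaux 0 (fun _ => 0) = 1 := by
  refine Nat.card_eq_one_iff_unique.2 ⟨⟨fun S T => Subtype.ext ?_⟩, ⟨fun _ _ => 0, ?_⟩⟩
  · ext i j
    rw [S.2.eq_zero i j j.zero_le, T.2.eq_zero i j j.zero_le]
  · exact ⟨by simp, by simp, by simp, by simp [boxes]⟩

end Branching

lemma bijOn_iff_card_fiber {α β : Type*} {s : Set α} {t : Set β} {f : α → β} (hs : s.Finite) :
    Set.BijOn f s t ↔ ∀ b, Nat.card {a // a ∈ s ∧ f a = b} = t.indicator 1 b := by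
  constructor
  · intro h b
    by_cases hb : b ∈ t
    · rw [Set.indicator_of_mem hb, Pi.one_apply, Nat.card_eq_one_iff_unique]
      obtain ⟨a, ha, rfl⟩ := h.surjOn hb
      exact ⟨⟨fun x y => Subtype.ext (h.injOn x.2.1 y.2.1 (x.2.2.trans y.2.2.symm))⟩, ⟨a, ha, rfl⟩⟩
    · rw [Set.indicator_of_notMem hb, Nat.card_eq_zero]
      exact Or.inl ⟨fun x => hb (x.2.2 ▸ h.mapsTo x.2.1)⟩
  · intro h
    have unique_fiber {b : β} (hb : b ∈ t) :
        Subsingleton {a // a ∈ s ∧ f a = b} ∧ Nonempty {a // a ∈ s ∧ f a = b} := by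
      rw [← Nat.card_eq_one_iff_unique, h b, Set.indicator_of_mem hb, Pi.one_apply]
    have maps : Set.MapsTo f s t := fun a ha => by
      have : Finite {x // x ∈ s ∧ f x = f a} := hs.subset fun _ hx => hx.1
      have : Nonempty {x // x ∈ s ∧ f x = f a} := ⟨a, ha, rfl⟩
      exact Set.mem_of_indicator_ne_zero (h (f a) ▸ Nat.card_pos.ne')
    refine ⟨maps, fun a ha a' ha' heq => ?_, fun b hb => ?_⟩
    · have := (unique_fiber (maps ha)).1
      exact congrArg Subtype.val (Subsingleton.elim (⟨a, ha, rfl⟩ : {x // x ∈ s ∧ f x = f a})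
        ⟨a', ha', heq.symm⟩)
    · obtain ⟨a, ha, hab⟩ := (unique_fiber hb).2
      exact ⟨a, ha, hab⟩

lemma finite_boxes_getD (l : List ℕ) : (boxes (l.getD · 0)).Finite := by
  refine ((Set.finite_Iio l.length).biUnion fun i _ =>
    (Set.finite_Iio (l.getD i 0)).image (Prod.mk i)).subset ?_
  rintro ⟨i, j⟩ (hj : j < l.getD i 0)
  have hi : i < l.length := by
    by_contra! hle
    rw [List.getD_eq_default _ _ hle] at hj
    omega
  exact Set.mem_biUnion (Set.mem_Iio.2 hi) ⟨j, hj, rfl⟩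

lemma hasContent_replicate_one_iff {l : List ℕ} {T : ℕ → ℕ → ℕ} (n : ℕ) :
    HasContent l T (List.replicate n 1) ↔
      Set.BijOn (Function.uncurry T) (boxes (l.getD · 0)) (Set.Iio n) := by
  rw [bijOn_iff_card_fiber (finite_boxes_getD l)]
  refine forall_congr' fun k => Eq.congr_right ?_
  by_cases hk : k < n <;> simp [hk]

lemma isStandardTableau_iff {n : ℕ} {l : List ℕ} {T : ℕ → ℕ → ℕ} :
    IsStandardTableau n (l.getD · 0) T ↔ IsSSYT l T ∧ HasContent l T (List.replicate n 1) := by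
  rw [hasContent_replicate_one_iff]
  constructor
  · refine fun h => ⟨⟨fun i j₁ j₂ hj hj₂ => ?_, h.col_lt, h.eq_zero⟩, h.bijOn⟩
    rcases hj.eq_or_lt with rfl | hj
    exacts [le_rfl, (h.row_lt i j₁ j₂ hj hj₂).le]
  · rintro ⟨⟨row_le, col_lt, eq_zero⟩, bijOn⟩
    refine ⟨fun i j₁ j₂ hj hj₂ => (row_le i j₁ j₂ hj.le hj₂).lt_of_ne fun heq => hj.ne ?_,
      col_lt, eq_zero, bijOn⟩
    exact congrArg Prod.snd (bijOn.injOn (show (i, j₁) ∈ boxes _ from hj.trans hj₂)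
      (show (i, j₂) ∈ boxes _ from hj₂) heq)

lemma fSYT_eq_numStandardTableaux (l : List ℕ) :
    fSYT l = numStandardTableaux l.sum (l.getD · 0) := by
  simp only [fSYT, kostka, numStandardTableaux, isStandardTableau_iff]

lemma fSYT_append_zero (l : List ℕ) : fSYT (l ++ [0]) = fSYT l := by
  have rows : ((l ++ [0]).getD · 0) = (l.getD · 0) := by
    ext i
    rcases lt_or_ge i l.length with hi | hi
    · rw [List.getD_append _ _ _ _ hi]
    · rw [List.getD_append_right _ _ _ _ hi, List.getD_eq_default _ _ hi]
      cases i - l.length <;> rfl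
  rw [fSYT_eq_numStandardTableaux, fSYT_eq_numStandardTableaux, rows, List.sum_append,
    List.sum_singleton, add_zero]

section TwoRows

open scoped Nat

lemma antitone_two_row {p q : ℕ} (hqp : q ≤ p) : Antitone ([p, q].getD · 0) := by
  refine antitone_nat_of_succ_le fun i => ?_
  rcases i with _ | _ | i <;> simp [hqp]

lemma removeBox_two_row_zero (p q : ℕ) :
    removeBox ([p, q].getD · 0) 0 = ([p - 1, q].getD · 0) := by
  ext i
  rcases i with _ | i <;> simp [removeBox_apply]

lemma removeBox_two_row_one (p q : ℕ) :
    removeBox ([p, q].getD · 0) 1 = ([p, q - 1].getD · 0) := by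
  ext i
  rcases i with _ | _ | i <;> simp [removeBox_apply]

lemma fSYT_two_row_rec {p q : ℕ} (hqp : q ≤ p) (hp : 0 < p) :
    fSYT [p, q] = (if q < p then fSYT [p - 1, q] else 0) +
      if 0 < q then fSYT [p, q - 1] else 0 := by
  obtain ⟨n, hn⟩ : ∃ n, [p, q].sum = n + 1 := ⟨p + q - 1, by rw [List.sum_pair]; omega⟩
  have corners (i : ℕ) : i ∈ {i ∈ range 2 | [p, q].getD (i + 1) 0 < [p, q].getD i 0} ↔
      [p, q].getD (i + 1) 0 < [p, q].getD i 0 := by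
    rcases i with _ | _ | i <;> simp
  have left : q < p → [p - 1, q].sum = n := by grind
  have right : 0 < q → [p, q - 1].sum = n := by grind
  rw [fSYT_eq_numStandardTableaux, hn, numStandardTableaux_succ n (antitone_two_row hqp) corners,
    sum_filter, sum_range_succ, sum_range_one, removeBox_two_row_zero, removeBox_two_row_one]
  congr 1
  · exact if_ctx_congr Iff.rfl (fun h => by rw [fSYT_eq_numStandardTableaux, left h]) (by simp)
  · exact if_ctx_congr Iff.rfl (fun h => by rw [fSYT_eq_numStandardTableaux, right h]) (by simp)

lemma fSYT_zero_zero : fSYT [0, 0] = 1 := by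
  have rows : ([0, 0].getD · 0) = fun _ : ℕ => 0 := by
    ext i
    rcases i with _ | _ | i <;> rfl
  rw [fSYT_eq_numStandardTableaux, rows]
  exact numStandardTableaux_zero

theorem fSYT_two_row_mul_factorial (q b : ℕ) :
    fSYT [q + b, q] * ((q + b + 1)! * q !) = (2 * q + b)! * (b + 1) := by
  induction q generalizing b with
  | zero =>
    induction b with
    | zero => simp [fSYT_zero_zero]
    | succ b ih =>
      have branch : fSYT [b + 1, 0] = fSYT [b, 0] := by
        simpa using fSYT_two_row_rec b.succ.zero_le b.succ_pos
      simp only [zero_add, mul_zero, Nat.factorial_zero, mul_one] at ih ⊢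
      rw [Nat.factorial_succ b] at ih
      rw [branch, Nat.factorial_succ (b + 1), Nat.factorial_succ b]
      linear_combination (b + 2) * ih
  | succ q ihq =>
    induction b with
    | zero =>
      have branch : fSYT [q + 1, q + 1] = fSYT [q + 1, q] := by
        simpa using fSYT_two_row_rec le_rfl q.succ_pos
      have ih := ihq 1
      have size : 2 * (q + 1) + 0 = 2 * q + 1 + 1 := by ring
      rw [add_zero, branch, size, Nat.factorial_succ (2 * q + 1), Nat.factorial_succ q]
      linear_combination (q + 1) * ih
    | succ b ihb =>
      have branch : fSYT [q + 1 + (b + 1), q + 1] =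
          fSYT [q + 1 + b, q + 1] + fSYT [q + 1 + (b + 1), q] := by
        simpa using fSYT_two_row_rec (p := q + 1 + (b + 1)) (q := q + 1) (by omega) (by omega)
      have ih := ihq (b + 2)
      have row : q + (b + 2) = q + 1 + (b + 1) := by ring
      have size : 2 * q + (b + 2) = 2 * (q + 1) + b := by ring
      have size' : 2 * (q + 1) + (b + 1) = 2 * (q + 1) + b + 1 := by ring
      rw [row, size, Nat.factorial_succ (q + 1 + (b + 1))] at ih
      rw [Nat.factorial_succ q] at ihb
      rw [branch, size', Nat.factorial_succ (2 * (q + 1) + b), Nat.factorial_succ (q + 1 + (b + 1)),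
        Nat.factorial_succ q]
      linear_combination (q + b + 3) * ihb + (q + 1) * ih

lemma fSYT_two_row_pos (q b : ℕ) : 0 < fSYT [q + b, q] :=
  Nat.pos_of_mul_pos_right (b := (q + b + 1)! * q !) <| by
    rw [fSYT_two_row_mul_factorial]
    positivity

lemma fSYT_two_row_ratio (q b : ℕ) :
    fSYT [q + 1 + b, q + 1] * ((q + 1) * (b + 3)) =
      fSYT [q + (b + 2), q] * ((q + b + 3) * (b + 1)) := by
  have h₁ := fSYT_two_row_mul_factorial (q + 1) b
  have h₂ := fSYT_two_row_mul_factorial q (b + 2)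
  have row : q + 1 + b + 1 = q + b + 2 := by ring
  have size : 2 * (q + 1) + b = 2 * q + (b + 2) := by ring
  have row' : q + (b + 2) + 1 = (q + b + 2) + 1 := by ring
  rw [row, size, Nat.factorial_succ q] at h₁
  rw [row', Nat.factorial_succ (q + b + 2)] at h₂
  refine mul_right_cancel₀ (mul_ne_zero (q + b + 2).factorial_ne_zero q.factorial_ne_zero) ?_
  linear_combination (b + 3) * h₁ - (b + 1) * h₂

lemma fSYT_two_row_le_iff (q b : ℕ) :
    fSYT [q + 1 + b, q + 1] ≤ fSYT [q + (b + 2), q] ↔ (b + 1) * (b + 2) ≤ 2 * (q + 1) := by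
  have key : (q + b + 3) * (b + 1) + 2 * (q + 1) = (q + 1) * (b + 3) + (b + 1) * (b + 2) := by ring
  rw [← Nat.mul_le_mul_right_iff (show 0 < (q + 1) * (b + 3) by positivity), fSYT_two_row_ratio,
    Nat.mul_le_mul_left_iff (fSYT_two_row_pos q (b + 2))]
  omega

theorem strictMonoOn_fSYT_two_row {a b : ℕ} (h : 2 * a < (b + 1) * (b + 2)) :
    StrictMonoOn (fun i => fSYT [2 * a + b - i, i]) (Set.Iic a) := by
  refine strictMonoOn_Iic_of_lt_succ fun i hi => ?_
  obtain ⟨k, rfl⟩ : ∃ k, a = i + 1 + k := Nat.exists_eq_add_of_le hi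
  -- A smaller second row comes with a larger row difference, so the inequality `h` is inherited.
  have hk : 2 * (i + 1) < (b + 2 * k + 1) * (b + 2 * k + 2) := by nlinarith
  have lower : 2 * (i + 1 + k) + b - i = i + (b + 2 * k + 2) := by omega
  have upper : 2 * (i + 1 + k) + b - (i + 1) = i + 1 + (b + 2 * k) := by omega
  rw [← not_le, ← fSYT_two_row_le_iff, not_le] at hk
  simpa only [Order.succ_eq_add_one, lower, upper] using hk

end TwoRows

section Dominance

variable {n p q i : ℕ} {m : List ℕ}

/-- The partition `(n - i, i)` of `n`, which has only one part if `i = 0`. -/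
def twoRowPartition (n i : ℕ) : List ℕ := if i = 0 then [n] else [n - i, i]

lemma twoRowPartition_of_pos (hi : 0 < i) : twoRowPartition n i = [n - i, i] :=
  if_neg hi.ne'

lemma fSYT_twoRowPartition (n i : ℕ) : fSYT (twoRowPartition n i) = fSYT [n - i, i] := by
  rcases i.eq_zero_or_pos with rfl | hi
  · exact (fSYT_append_zero [n]).symm
  · rw [twoRowPartition_of_pos hi]

lemma isPartitionOf_twoRowPartition (hn : 0 < n) (hi : 2 * i ≤ n) :
    IsPartitionOf n (twoRowPartition n i) := by
  rcases i.eq_zero_or_pos with rfl | hi₀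
  · simp [twoRowPartition, IsPartitionOf, hn]
  · rw [twoRowPartition_of_pos hi₀]
    exact ⟨List.pairwise_pair.2 (by omega), by grind, by grind⟩

lemma domLE_twoRowPartition (hi : i ≤ q) : DomLE [p, q] (twoRowPartition (p + q) i) := by
  intro k
  rw [twoRowPartition]
  split_ifs <;> rcases k with _ | _ | k <;> grind

lemma IsPartitionOf.exists_eq_twoRowPartition (hm : IsPartitionOf (p + q) m) (hpq : 0 < p + q)
    (hdom : DomLE [p, q] m) : ∃ i ≤ q, m = twoRowPartition (p + q) i := by
  obtain ⟨-, hpos, hsum⟩ := hm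
  have h₁ := hdom 1
  have h₂ := hdom 2
  rcases m with _ | ⟨x, _ | ⟨y, _ | ⟨z, l⟩⟩⟩
  · exact absurd hsum hpq.ne
  · exact ⟨0, q.zero_le, by simpa [twoRowPartition] using hsum⟩
  · have hy : 0 < y := hpos y (by simp)
    refine ⟨y, by grind, ?_⟩
    rw [twoRowPartition_of_pos hy, ← hsum, List.sum_pair, Nat.add_sub_cancel]
  · have hz : 0 < z := hpos z (by simp)
    grind

theorem stdMaximal_two_row_iff (hqp : q ≤ p) (hq : 0 < q) :
    StdMaximal (p + q) [p, q] ↔ ∀ i < q, fSYT [p + q - i, i] < fSYT [p, q] := by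
  have self : twoRowPartition (p + q) q = [p, q] := by
    rw [twoRowPartition_of_pos hq, Nat.add_sub_cancel]
  constructor
  · intro hmax i hi
    by_contra! hle
    rw [← fSYT_twoRowPartition] at hle
    refine hmax _ (isPartitionOf_twoRowPartition (by omega) (by omega)) ?_
      ⟨domLE_twoRowPartition hi.le, hle⟩
    rw [twoRowPartition]
    grind
  · rintro hlt m hm hne ⟨hdom, hle⟩
    obtain ⟨i, hi, rfl⟩ := hm.exists_eq_twoRowPartition (by omega) hdom
    have hiq : i ≠ q := by
      rintro rfl
      exact hne self
    rw [fSYT_twoRowPartition] at hle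
    exact (hlt i (hi.lt_of_ne hiq)).not_ge hle

end Dominance

lemma le_mul_add_three_div_two_iff (a b : ℕ) :
    a ≤ b * (b + 3) / 2 ↔ 2 * a < (b + 1) * (b + 2) := by
  have even : Even (b * (b + 3)) := by grind
  have expand : (b + 1) * (b + 2) = b * (b + 3) + 2 := by ring
  rw [Nat.le_div_iff_mul_le two_pos, expand]
  have := even.two_dvd
  omega

/-- `(a+b, a)` is maximal in the standard immersion poset on
partitions of `2a+b` if and only if `b(b+3)/2 ≥ a`. -/
theorem std_maximal_two_row (a b : ℕ) (ha : 1 ≤ a) :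
    StdMaximal (2 * a + b) [a + b, a] ↔ a ≤ b * (b + 3) / 2 := by
  have size : 2 * a + b = a + b + a := by ring
  rw [size, stdMaximal_two_row_iff (by omega) ha, le_mul_add_three_div_two_iff]
  constructor
  · intro hlt
    obtain ⟨q, rfl⟩ : ∃ q, a = q + 1 := ⟨a - 1, by omega⟩
    have shape : q + 1 + b + (q + 1) - q = q + (b + 2) := by omega
    have hlast := hlt q q.lt_succ_self
    rwa [shape, ← not_le, fSYT_two_row_le_iff, not_le] at hlast
  · intro h i hi
    simpa [size] using strictMonoOn_fSYT_two_row h hi.le Set.self_mem_Iic hi
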